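/- For every fixed γ > 0 there exist a constant c > 0, an integer n₀ and a real θ₀ > 0 such that for all n ≥ n₀, all integers x with x ≥ θ₀·aₙ, and each k ∈ {1, 2, 3}, the tilted truncated moments m̃ₖ = Σ_{|z| ≤ γx} z^k·e^{μz}·p(z) satisfy |m̃ₖ| ≤ c·x^k/n, where Λ = 1/(n·F̄(x)) and μ = (log Λ)/(γx). -/

import Mathlib

/-!
Write `y = γ x`, so that the tilt satisfies `e^{μ z} = Λ^{z / y} ≤ Λ` for `|z| ≤ y`, once `Λ ≥ 1`.
The latter holds for `x ≥ 2 aₙ` because `n H(2 aₙ) → 2^(-α) < 1`. As `Λ = 1 / (n F̄(x))` and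
`H(y) = O(F̄(x))` by regular variation and tail balance, everything reduces to
`|m̃ₖ| ≤ C Λ y^k H(y)`.

* If `k > α`, bound the tilt by `Λ`; the Karamata estimate
  `∑_{|z| ≤ y} |z|^k p(z) ≤ C y^k H(y)` (`karamata_truncated`) finishes.
* Otherwise `k = 1` and `α ∈ (1, 2)`. Split `e^{μ z} = 1 + (e^{μ z} - 1)`. Because the mean is zero,
  the first part is minus the tail mean `∑_{|z| > y} z p(z)`, which is `O(y H(y))`
  (`truncated_mean`). Convexity of the exponential gives `|e^{μ z} - 1| ≤ Λ |z| / y`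
  (`abs_exp_sub_one_le_chord`), so the second part is at most `Λ / y` times the truncated second
  moment, to which the Karamata estimate with exponent `2 > α` applies.

Both Karamata estimates come from a dyadic recursion `y ↔ 2y`, using only the limit of
`H(2y) / H(y)`.
-/

open Filter Topology

/-- `FbarZ p x = P(X > x)`, the right tail of a ℤ-valued step distribution with pmf `p`. -/
noncomputable def FbarZ (p : ℤ → ℝ) (x : ℝ) : ℝ := ∑' z : ℤ, if x < (z : ℝ) then p z else 0

/-- `HZ p x = P(|X| > x)`, the two-sided tail. -/
noncomputable def HZ (p : ℤ → ℝ) (x : ℝ) : ℝ := ∑' z : ℤ, if x < |(z : ℝ)| then p z else 0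

/-- `Λ = 1/(n·F̄(x))`. -/
noncomputable def tiltLambda (p : ℤ → ℝ) (n : ℕ) (x : ℤ) : ℝ :=
  1 / ((n : ℝ) * FbarZ p (x : ℝ))

/-- `μ = log Λ / (γx)`. -/
noncomputable def tiltMu (p : ℤ → ℝ) (γ : ℝ) (n : ℕ) (x : ℤ) : ℝ :=
  Real.log (tiltLambda p n x) / (γ * (x : ℝ))

/-- `m₀ = Σ_{|z| ≤ γx} e^{μz}·p(z)`, the tilted truncated total mass. -/
noncomputable def tiltM0 (p : ℤ → ℝ) (γ : ℝ) (n : ℕ) (x : ℤ) : ℝ :=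
  ∑' z : ℤ, if |(z : ℝ)| ≤ γ * (x : ℝ) then Real.exp (tiltMu p γ n x * (z : ℝ)) * p z else 0

/-- `m̃ₖ = Σ_{|z| ≤ γx} z^k·e^{μz}·p(z)`, the tilted truncated `k`-th moment. -/
noncomputable def tiltMoment (p : ℤ → ℝ) (γ : ℝ) (k : ℕ) (n : ℕ) (x : ℤ) : ℝ :=
  ∑' z : ℤ, if |(z : ℝ)| ≤ γ * (x : ℝ) then
    (z : ℝ) ^ k * Real.exp (tiltMu p γ n x * (z : ℝ)) * p z else 0

/-! ### Tails and finite sums -/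

lemma summable_tail {p : ℤ → ℝ} (hp0 : ∀ z, 0 ≤ p z) (hp : Summable p) (P : ℤ → Prop)
    [DecidablePred P] : Summable (fun z : ℤ => if P z then p z else 0) := by
  refine Summable.of_nonneg_of_le (fun z => ?_) (fun z => ?_) hp
  · split_ifs
    · exact hp0 z
    · exact le_rfl
  · split_ifs
    · exact le_rfl
    · exact hp0 z

lemma HZ_nonneg {p : ℤ → ℝ} (hp0 : ∀ z, 0 ≤ p z) (x : ℝ) : 0 ≤ HZ p x := by
  refine tsum_nonneg (fun z => ?_)
  split_ifs
  · exact hp0 z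
  · exact le_rfl

lemma HZ_antitone {p : ℤ → ℝ} (hp0 : ∀ z, 0 ≤ p z) (hp : Summable p) : Antitone (HZ p) := by
  intro x y hxy
  refine Summable.tsum_le_tsum (fun z => ?_) (summable_tail hp0 hp _) (summable_tail hp0 hp _)
  by_cases h : y < |(z : ℝ)|
  · rw [if_pos h, if_pos (hxy.trans_lt h)]
  · rw [if_neg h]
    split_ifs
    · exact hp0 z
    · exact le_rfl

lemma FbarZ_le_HZ {p : ℤ → ℝ} (hp0 : ∀ z, 0 ≤ p z) (hp : Summable p) (x : ℝ) :
    FbarZ p x ≤ HZ p x := by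
  refine Summable.tsum_le_tsum (fun z => ?_) (summable_tail hp0 hp _) (summable_tail hp0 hp _)
  by_cases h : x < (z : ℝ)
  · rw [if_pos h, if_pos (h.trans_le (le_abs_self _))]
  · rw [if_neg h]
    split_ifs
    · exact hp0 z
    · exact le_rfl

lemma sum_le_HZ {p : ℤ → ℝ} (hp0 : ∀ z, 0 ≤ p z) (hp : Summable p) (y : ℝ) (s : Finset ℤ)
    (hs : ∀ z ∈ s, y < |(z : ℝ)|) : ∑ z ∈ s, p z ≤ HZ p y := by
  have h1 : ∑ z ∈ s, p z = ∑ z ∈ s, (if y < |(z : ℝ)| then p z else 0) :=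
    Finset.sum_congr rfl (fun z hz => by rw [if_pos (hs z hz)])
  rw [h1]
  refine Summable.sum_le_tsum s (fun z _ => ?_) (summable_tail hp0 hp _)
  split_ifs
  · exact hp0 z
  · exact le_rfl

/-- Regular variation with a positive limit forces the antitone tail `HZ p` to be positive
everywhere: a zero would propagate to infinity and make the ratio `0 / 0 = 0`. -/
lemma HZ_pos {p : ℤ → ℝ} {α : ℝ} (hp0 : ∀ z, 0 ≤ p z) (hp : Summable p)
    (hH : ∀ l : ℝ, 0 < l →
      Tendsto (fun x : ℝ => HZ p (l * x) / HZ p x) atTop (nhds (l ^ (-α)))) (x : ℝ) :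
    0 < HZ p x := by
  have h := (hH 2 two_pos).eventually (lt_mem_nhds (Real.rpow_pos_of_pos two_pos (-α)))
  obtain ⟨y, hy, hxy⟩ := (h.and (eventually_ge_atTop x)).exists
  refine lt_of_lt_of_le ?_ (HZ_antitone hp0 hp hxy)
  refine lt_of_le_of_ne (HZ_nonneg hp0 y) (fun h0 => ?_)
  rw [← h0, div_zero] at hy
  exact lt_irrefl _ hy

/-! ### Karamata-type bounds -/

/-- Truncated moments of order `k > α` satisfy `∑_{|z| ≤ y} |z|^k p(z) ≤ C y^k H(y)`. The bound is
propagated from `[A, 2^m A]` to `[A, 2^(m+1) A]` by halving `y`: one step costs the factor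
`ρ / 2^k < 1`, where `H(y) ≤ ρ H(2y)`. -/
lemma karamata_truncated {p : ℤ → ℝ} {α : ℝ} (hp0 : ∀ z, 0 ≤ p z) (hp1 : HasSum p 1)
    (hH : ∀ l : ℝ, 0 < l →
      Tendsto (fun x : ℝ => HZ p (l * x) / HZ p x) atTop (nhds (l ^ (-α))))
    (k : ℕ) (hk : α < k) :
    ∃ C : ℝ, 0 < C ∧ ∃ A : ℝ, 0 < A ∧ ∀ y : ℝ, A ≤ y → ∀ s : Finset ℤ,
      (∀ z ∈ s, |(z : ℝ)| ≤ y) → ∑ z ∈ s, |(z : ℝ)| ^ k * p z ≤ C * (y ^ k * HZ p y) := by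
  have hpos := HZ_pos hp0 hp1.summable hH
  have hanti := HZ_antitone hp0 hp1.summable
  -- `δ` lies strictly between `2^(-k)` and the limiting ratio `2^(-α)`
  obtain ⟨δ, hδ1, hδ2⟩ : ∃ δ : ℝ, (2 : ℝ) ^ (-(k : ℝ)) < δ ∧ δ < (2 : ℝ) ^ (-α) :=
    exists_between (Real.rpow_lt_rpow_of_exponent_lt one_lt_two (by linarith))
  have h2k : (2 : ℝ) ^ (-(k : ℝ)) = ((2 : ℝ) ^ k)⁻¹ := by
    rw [Real.rpow_neg two_pos.le, Real.rpow_natCast]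
  rw [h2k] at hδ1
  have h2kpos : (0 : ℝ) < 2 ^ k := by positivity
  have hδpos : 0 < δ := lt_trans (by positivity) hδ1
  have hδk : 1 < 2 ^ k * δ := by
    rwa [inv_lt_iff_one_lt_mul₀' h2kpos] at hδ1
  obtain ⟨A0, hA0⟩ := eventually_atTop.1 ((hH 2 two_pos).eventually (lt_mem_nhds hδ2))
  set A := max A0 1 with hA
  have hApos : 0 < A := lt_of_lt_of_le one_pos (le_max_right _ _)
  have hstep : ∀ y, A ≤ y → δ * HZ p y ≤ HZ p (2 * y) := fun y hy => by
    have := hA0 y ((le_max_left _ _).trans hy)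
    exact ((lt_div_iff₀ (hpos y)).1 this).le
  -- `C2` is the fixed point of the halving recursion
  set C2 := 2 ^ k / (2 ^ k * δ - 1) with hC2
  set C1 := 2 ^ k / HZ p (2 * A) with hC1
  have hC2pos : 0 < C2 := div_pos h2kpos (by linarith)
  have hC : 0 < max C1 C2 := lt_of_lt_of_le hC2pos (le_max_right _ _)
  refine ⟨max C1 C2, hC, A, hApos, ?_⟩
  have key : ∀ m : ℕ, ∀ y : ℝ, A ≤ y → y ≤ 2 ^ m * (2 * A) → ∀ s : Finset ℤ,
      (∀ z ∈ s, |(z : ℝ)| ≤ y) →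
      ∑ z ∈ s, |(z : ℝ)| ^ k * p z ≤ max C1 C2 * (y ^ k * HZ p y) := by
    have base : ∀ y : ℝ, A ≤ y → y ≤ 2 * A → ∀ s : Finset ℤ,
      (∀ z ∈ s, |(z : ℝ)| ≤ y) →
      ∑ z ∈ s, |(z : ℝ)| ^ k * p z ≤ max C1 C2 * (y ^ k * HZ p y) := by
      intro y hAy hy s hs
      have hy0 : 0 < y := hApos.trans_le hAy
      have h1 : ∑ z ∈ s, |(z : ℝ)| ^ k * p z ≤ y ^ k * 1 := by
        calc ∑ z ∈ s, |(z : ℝ)| ^ k * p z ≤ ∑ z ∈ s, y ^ k * p z :=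
              Finset.sum_le_sum (fun z hz => mul_le_mul_of_nonneg_right
                (pow_le_pow_left₀ (abs_nonneg _) (hs z hz) k) (hp0 z))
          _ = y ^ k * ∑ z ∈ s, p z := by rw [Finset.mul_sum]
          _ ≤ y ^ k * 1 := mul_le_mul_of_nonneg_left
                (sum_le_hasSum s (fun z _ => hp0 z) hp1) (by positivity)
      have h2 : 1 ≤ C1 * HZ p y := by
        have : HZ p (2 * A) ≤ HZ p y := hanti hy
        rw [hC1, div_mul_eq_mul_div, le_div_iff₀ (hpos _)]
        have h1k : (1 : ℝ) ≤ 2 ^ k := one_le_pow₀ one_le_two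
        nlinarith [hpos (2 * A)]
      have h3 : 1 ≤ max C1 C2 * HZ p y :=
        h2.trans (mul_le_mul_of_nonneg_right (le_max_left _ _) (hpos y).le)
      calc _ ≤ y ^ k * 1 := h1
        _ ≤ y ^ k * (max C1 C2 * HZ p y) := mul_le_mul_of_nonneg_left h3 (by positivity)
        _ = _ := by ring
    intro m
    induction m with
    | zero => simpa using base
    | succ m ih =>
      intro y hAy hy s hs
      by_cases hy2 : y ≤ 2 * A
      · exact base y hAy hy2 s hs
      push Not at hy2
      obtain ⟨w, rfl⟩ : ∃ w, y = 2 * w := ⟨y / 2, by ring⟩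
      have hAw : A ≤ w := by linarith
      have hw0 : 0 < w := hApos.trans_le hAw
      have hw : w ≤ 2 ^ m * (2 * A) := by
        rw [pow_succ] at hy; linarith
      have hin := ih w hAw hw (s.filter (fun z : ℤ => |(z : ℝ)| ≤ w))
        (fun z hz => (Finset.mem_filter.1 hz).2)
      have hout : ∑ z ∈ s.filter (fun z : ℤ => ¬ |(z : ℝ)| ≤ w), |(z : ℝ)| ^ k * p z
          ≤ (2 * w) ^ k * HZ p w := by
        calc _ ≤ ∑ z ∈ s.filter (fun z : ℤ => ¬ |(z : ℝ)| ≤ w), (2 * w) ^ k * p z :=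
              Finset.sum_le_sum (fun z hz => mul_le_mul_of_nonneg_right
                (pow_le_pow_left₀ (abs_nonneg _) (hs z (Finset.mem_filter.1 hz).1) k) (hp0 z))
          _ = (2 * w) ^ k * ∑ z ∈ s.filter (fun z : ℤ => ¬ |(z : ℝ)| ≤ w), p z := by
              rw [Finset.mul_sum]
          _ ≤ _ := mul_le_mul_of_nonneg_left (sum_le_HZ hp0 hp1.summable w _
                (fun z hz => not_le.1 (Finset.mem_filter.1 hz).2)) (by positivity)
      rw [← Finset.sum_filter_add_sum_filter_not s (fun z : ℤ => |(z : ℝ)| ≤ w)]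
      have hfix : max C1 C2 + 2 ^ k ≤ max C1 C2 * (2 ^ k * δ) := by
        have : 2 ^ k ≤ max C1 C2 * (2 ^ k * δ - 1) := by
          rw [← div_le_iff₀ (by linarith)]
          exact le_max_right _ _
        linarith
      have hwk : 0 ≤ w ^ k * HZ p w := mul_nonneg (by positivity) (hpos w).le
      calc _ ≤ max C1 C2 * (w ^ k * HZ p w) + (2 * w) ^ k * HZ p w := add_le_add hin hout
        _ = (max C1 C2 + 2 ^ k) * (w ^ k * HZ p w) := by rw [mul_pow]; ring
        _ ≤ (max C1 C2 * (2 ^ k * δ)) * (w ^ k * HZ p w) :=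
            mul_le_mul_of_nonneg_right hfix hwk
        _ = (max C1 C2 * (2 * w) ^ k) * (δ * HZ p w) := by rw [mul_pow]; ring
        _ ≤ (max C1 C2 * (2 * w) ^ k) * HZ p (2 * w) :=
            mul_le_mul_of_nonneg_left (hstep w hAw) (by positivity)
        _ = _ := by ring
  intro y hy s hs
  obtain ⟨m, hm⟩ := pow_unbounded_of_one_lt (y / (2 * A)) (one_lt_two : (1 : ℝ) < 2)
  exact key m y hy ((div_le_iff₀ (by positivity)).1 hm.le) s hs

/-- For `α > 1` the first absolute moment of the tail satisfies
`∑_{|z| > y} |z| p(z) ≤ C y H(y)`, stated for finite partial sums so that summability follows. -/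
lemma karamata_tail {p : ℤ → ℝ} {α : ℝ} (hp0 : ∀ z, 0 ≤ p z) (hp1 : HasSum p 1)
    (hH : ∀ l : ℝ, 0 < l →
      Tendsto (fun x : ℝ => HZ p (l * x) / HZ p x) atTop (nhds (l ^ (-α))))
    (hα : 1 < α) :
    ∃ C : ℝ, 0 < C ∧ ∃ A : ℝ, 0 < A ∧ ∀ y : ℝ, A ≤ y → ∀ s : Finset ℤ,
      (∀ z ∈ s, y < |(z : ℝ)|) → ∑ z ∈ s, |(z : ℝ)| * p z ≤ C * (y * HZ p y) := by
  have hpos := HZ_pos hp0 hp1.summable hH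
  obtain ⟨σ, hσ1, hσ2⟩ : ∃ σ : ℝ, (2 : ℝ) ^ (-α) < σ ∧ σ < (2 : ℝ) ^ (-1 : ℝ) :=
    exists_between (Real.rpow_lt_rpow_of_exponent_lt one_lt_two (by linarith))
  rw [Real.rpow_neg_one] at hσ2
  have hσ3 : 0 < 1 - 2 * σ := by linarith
  obtain ⟨A0, hA0⟩ := eventually_atTop.1 ((hH 2 two_pos).eventually (gt_mem_nhds hσ1))
  set A := max A0 1 with hA
  have hApos : 0 < A := lt_of_lt_of_le one_pos (le_max_right _ _)
  have hstep : ∀ y, A ≤ y → HZ p (2 * y) ≤ σ * HZ p y := fun y hy => by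
    have := hA0 y ((le_max_left _ _).trans hy)
    exact ((div_lt_iff₀ (hpos y)).1 this).le
  set C := 2 / (1 - 2 * σ) with hC
  have hCpos : 0 < C := by positivity
  have hfix : 2 + C * (2 * σ) = C := by
    rw [hC]; field_simp; ring
  refine ⟨C, hCpos, A, hApos, ?_⟩
  have key : ∀ m : ℕ, ∀ y : ℝ, A ≤ y → ∀ s : Finset ℤ,
      (∀ z ∈ s, y < |(z : ℝ)| ∧ |(z : ℝ)| ≤ 2 ^ m * y) →
      ∑ z ∈ s, |(z : ℝ)| * p z ≤ C * (y * HZ p y) := by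
    intro m
    induction m with
    | zero =>
      intro y hy s hs
      have hse : s = ∅ := Finset.eq_empty_of_forall_notMem (fun z hz => by
        have := hs z hz
        rw [pow_zero, one_mul] at this
        linarith [this.1, this.2])
      rw [hse, Finset.sum_empty]
      have := hpos y
      have hy0 : 0 < y := hApos.trans_le hy
      positivity
    | succ m ih =>
      intro y hy s hs
      have hy0 : 0 < y := hApos.trans_le hy
      have hout := ih (2 * y) (by linarith) (s.filter (fun z : ℤ => ¬ |(z : ℝ)| ≤ 2 * y))
        (fun z hz => by
          obtain ⟨h1, h2⟩ := Finset.mem_filter.1 hz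
          refine ⟨not_le.1 h2, (hs z h1).2.trans (le_of_eq ?_)⟩
          rw [pow_succ]; ring)
      have hin : ∑ z ∈ s.filter (fun z : ℤ => |(z : ℝ)| ≤ 2 * y), |(z : ℝ)| * p z
          ≤ (2 * y) * HZ p y := by
        calc _ ≤ ∑ z ∈ s.filter (fun z : ℤ => |(z : ℝ)| ≤ 2 * y), (2 * y) * p z :=
              Finset.sum_le_sum (fun z hz => mul_le_mul_of_nonneg_right
                (Finset.mem_filter.1 hz).2 (hp0 z))
          _ = (2 * y) * ∑ z ∈ s.filter (fun z : ℤ => |(z : ℝ)| ≤ 2 * y), p z := by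
              rw [Finset.mul_sum]
          _ ≤ _ := mul_le_mul_of_nonneg_left (sum_le_HZ hp0 hp1.summable y _
                (fun z hz => (hs z (Finset.mem_filter.1 hz).1).1)) (by positivity)
      rw [← Finset.sum_filter_add_sum_filter_not s (fun z : ℤ => |(z : ℝ)| ≤ 2 * y)]
      calc _ ≤ (2 * y) * HZ p y + C * (2 * y * HZ p (2 * y)) := add_le_add hin hout
        _ ≤ (2 * y) * HZ p y + C * (2 * y * (σ * HZ p y)) := by
            have := hstep y hy
            gcongr
        _ = (2 + C * (2 * σ)) * (y * HZ p y) := by ring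
        _ = _ := by rw [hfix]
  intro y hy s hs
  have hy0 : 0 < y := hApos.trans_le hy
  obtain ⟨m, hm⟩ := pow_unbounded_of_one_lt ((∑ z ∈ s, |(z : ℝ)|) / y)
    (one_lt_two : (1 : ℝ) < 2)
  refine key m y hy s (fun z hz => ⟨hs z hz, ?_⟩)
  exact (Finset.single_le_sum (f := fun z : ℤ => |(z : ℝ)|) (fun _ _ => abs_nonneg _) hz).trans
    ((div_le_iff₀ hy0).1 hm.le)

/-- The integers with `|z| ≤ y`. -/
noncomputable def ballZ (y : ℝ) : Finset ℤ := Finset.Icc (-⌊y⌋) ⌊y⌋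

lemma mem_ballZ {y : ℝ} {z : ℤ} : z ∈ ballZ y ↔ |(z : ℝ)| ≤ y := by
  rw [ballZ, Finset.mem_Icc, abs_le, Int.le_floor, neg_le, Int.le_floor]
  push_cast
  rw [neg_le]

/-- If the mean vanishes and `α > 1`, truncating at level `y` changes it by at most `C y H(y)`. -/
lemma truncated_mean {p : ℤ → ℝ} {α : ℝ} (hp0 : ∀ z, 0 ≤ p z) (hp1 : HasSum p 1)
    (hH : ∀ l : ℝ, 0 < l →
      Tendsto (fun x : ℝ => HZ p (l * x) / HZ p x) atTop (nhds (l ^ (-α))))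
    (hα : 1 < α) (hmean : ∑' z : ℤ, (z : ℝ) * p z = 0) :
    ∃ C : ℝ, 0 < C ∧ ∃ A : ℝ, 0 < A ∧ ∀ y : ℝ, A ≤ y →
      |∑ z ∈ ballZ y, (z : ℝ) * p z| ≤ C * (y * HZ p y) := by
  obtain ⟨C, hC, A, hA, h⟩ := karamata_tail hp0 hp1 hH hα
  refine ⟨C, hC, A, hA, fun y hy => ?_⟩
  have habs : ∀ z : ℤ, |(z : ℝ) * p z| = |(z : ℝ)| * p z := fun z => by
    rw [abs_mul, abs_of_nonneg (hp0 z)]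
  have hsum : Summable (fun z : ℤ => (z : ℝ) * p z) := by
    refine Summable.of_abs ?_
    refine summable_of_sum_le (c := A * 1 + C * (A * HZ p A)) (fun z => abs_nonneg _) (fun u => ?_)
    rw [← Finset.sum_filter_add_sum_filter_not u (fun z : ℤ => |(z : ℝ)| ≤ A)]
    simp only [habs]
    refine add_le_add ?_ (h A le_rfl _ (fun z hz => not_le.1 (Finset.mem_filter.1 hz).2))
    calc _ ≤ ∑ z ∈ u.filter (fun z : ℤ => |(z : ℝ)| ≤ A), A * p z :=
          Finset.sum_le_sum (fun z hz => mul_le_mul_of_nonneg_right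
            (Finset.mem_filter.1 hz).2 (hp0 z))
      _ = A * ∑ z ∈ u.filter (fun z : ℤ => |(z : ℝ)| ≤ A), p z := by rw [Finset.mul_sum]
      _ ≤ _ := mul_le_mul_of_nonneg_left (sum_le_hasSum _ (fun z _ => hp0 z) hp1) hA.le
  have hhs : HasSum (fun z : ℤ => (z : ℝ) * p z) 0 := hmean ▸ hsum.hasSum
  have hlim : Tendsto (fun t : Finset ℤ =>
      |∑ z ∈ t, (z : ℝ) * p z - ∑ z ∈ ballZ y, (z : ℝ) * p z|) atTop
      (𝓝 |0 - ∑ z ∈ ballZ y, (z : ℝ) * p z|) := by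
    have hhs' : Tendsto (fun t : Finset ℤ => ∑ z ∈ t, (z : ℝ) * p z) atTop (𝓝 0) := hhs
    exact (hhs'.sub_const _).abs
  rw [zero_sub, abs_neg] at hlim
  refine le_of_tendsto hlim ?_
  filter_upwards [eventually_ge_atTop (ballZ y)] with t ht
  rw [← Finset.sum_sdiff ht, add_sub_cancel_right]
  refine (Finset.abs_sum_le_sum_abs _ _).trans ?_
  simp only [habs]
  refine h y hy _ (fun z hz => ?_)
  have := (Finset.mem_sdiff.1 hz).2
  rw [mem_ballZ] at this
  exact not_le.1 this

/-! ### The tilt -/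

lemma tiltMoment_eq_sum (p : ℤ → ℝ) (γ : ℝ) (k n : ℕ) (x : ℤ) :
    tiltMoment p γ k n x =
      ∑ z ∈ ballZ (γ * x), (z : ℝ) ^ k * Real.exp (tiltMu p γ n x * (z : ℝ)) * p z := by
  rw [tiltMoment, tsum_eq_sum (s := ballZ (γ * x))]
  · exact Finset.sum_congr rfl (fun z hz => by rw [if_pos (mem_ballZ.1 hz)])
  · intro z hz
    rw [if_neg (fun h => hz (mem_ballZ.2 h))]

/-- Convexity of the exponential: on `|u| ≤ 1` the chord from `0` to `1` bounds
`|e^{Lu} - 1|` by `|u| (e^L - 1)`. -/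
lemma abs_exp_sub_one_le_chord {L u : ℝ} (hL : 0 ≤ L) (hu : |u| ≤ 1) :
    |Real.exp (L * u) - 1| ≤ |u| * (Real.exp L - 1) := by
  have hconv : ∀ v : ℝ, 0 ≤ v → v ≤ 1 → Real.exp (L * v) - 1 ≤ v * (Real.exp L - 1) := by
    intro v hv0 hv1
    have := convexOn_exp.2 (Set.mem_univ 0) (Set.mem_univ L) (sub_nonneg.2 hv1) hv0
      (by ring)
    simp only [smul_eq_mul, mul_zero, zero_add, Real.exp_zero] at this
    rw [mul_comm L v]
    linarith
  rcases le_total 0 u with h | h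
  · rw [abs_of_nonneg h] at hu ⊢
    rw [abs_of_nonneg (sub_nonneg.2 (Real.one_le_exp (by positivity)))]
    exact hconv u h hu
  · rw [abs_of_nonpos h] at hu ⊢
    have h1 := hconv (-u) (by linarith) hu
    have h2 : Real.exp (L * u) ≤ 1 := Real.exp_le_one_iff.2 (mul_nonpos_of_nonneg_of_nonpos hL h)
    rw [abs_of_nonpos (by linarith)]
    -- `1 - e^t ≤ e^{-t} - 1`, as `e^t + e^{-t} ≥ 2`
    have h3 := Real.add_one_le_exp (L * u)
    have h4 := Real.add_one_le_exp (L * -u)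
    nlinarith

/-- for every fixed `γ > 0` there exist `c > 0`, `n₀` and `θ₀ > 0` such that
for all `n ≥ n₀`, integers `x ≥ θ₀·aₙ` and `k ∈ {1,2,3}`, `|m̃ₖ| ≤ c·x^k/n`. -/
theorem tilted_moment_bounds (p : ℤ → ℝ) (α q : ℝ) (a : ℕ → ℝ)
    (hp0 : ∀ z, 0 ≤ p z) (hp1 : HasSum p 1)
    (hap : ∀ c d : ℤ, (∀ z, p z ≠ 0 → d ∣ (z - c)) → d = 1 ∨ d = -1)
    (hα : (0 < α ∧ α < 1) ∨ (1 < α ∧ α < 2))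
    (hH : ∀ l : ℝ, 0 < l →
      Tendsto (fun x : ℝ => HZ p (l * x) / HZ p x) atTop (nhds (l ^ (-α))))
    (hq : 0 < q) (hq1 : q ≤ 1)
    (hFq : Tendsto (fun x : ℝ => FbarZ p x / HZ p x) atTop (nhds q))
    (hmean : 1 < α → ∑' z : ℤ, (z : ℝ) * p z = 0)
    (ha : Tendsto a atTop atTop)
    (haH : Tendsto (fun n : ℕ => (n : ℝ) * HZ p (a n)) atTop (nhds 1)) :
    ∀ γ : ℝ, 0 < γ →
      ∃ c : ℝ, 0 < c ∧ ∃ n₀ : ℕ, ∃ θ₀ : ℝ, 0 < θ₀ ∧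
        ∀ n : ℕ, n₀ ≤ n → ∀ x : ℤ, θ₀ * a n ≤ (x : ℝ) →
          ∀ k ∈ ({1, 2, 3} : Finset ℕ),
            |tiltMoment p γ k n x| ≤ c * (x : ℝ) ^ k / (n : ℝ) := by
  intro γ hγ
  have hpos := HZ_pos hp0 hp1.summable hH
  have hα0 : 0 < α := by rcases hα with h | h <;> linarith [h.1]
  -- It suffices to bound each moment by `C Λ y^k H(y)` at `y = γ x`.
  have core : ∀ k ∈ ({1, 2, 3} : Finset ℕ), ∃ C : ℝ, 0 < C ∧ ∃ A : ℝ, ∀ n : ℕ, ∀ x : ℤ,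
      0 < x → A ≤ γ * x → 1 ≤ tiltLambda p n x →
      |tiltMoment p γ k n x| ≤ C * (tiltLambda p n x * ((γ * x) ^ k * HZ p (γ * x))) := by
    intro k hk
    by_cases hkα : α < k
    · obtain ⟨C, hC, A, hA, h⟩ := karamata_truncated hp0 hp1 hH k hkα
      refine ⟨C, hC, A, fun n x hx hAx hΛ => ?_⟩
      have hx' : (0 : ℝ) < x := by exact_mod_cast hx
      have hy : 0 < γ * x := by positivity
      have hΛ0 : 0 < tiltLambda p n x := by linarith
      rw [tiltMoment_eq_sum]
      calc _ ≤ ∑ z ∈ ballZ (γ * x), tiltLambda p n x * (|(z : ℝ)| ^ k * p z) := by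
            refine (Finset.abs_sum_le_sum_abs _ _).trans (Finset.sum_le_sum (fun z hz => ?_))
            rw [mem_ballZ] at hz
            have he : Real.exp (tiltMu p γ n x * z) ≤ tiltLambda p n x := by
              rw [← Real.le_log_iff_exp_le hΛ0, tiltMu, div_mul_eq_mul_div, div_le_iff₀ hy]
              exact mul_le_mul_of_nonneg_left ((le_abs_self _).trans hz) (Real.log_nonneg hΛ)
            rw [abs_mul, abs_mul, abs_pow, Real.abs_exp, abs_of_nonneg (hp0 z)]
            have h1 : 0 ≤ |(z : ℝ)| ^ k * p z := mul_nonneg (by positivity) (hp0 z)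
            nlinarith
        _ = tiltLambda p n x * ∑ z ∈ ballZ (γ * x), |(z : ℝ)| ^ k * p z := by
            rw [Finset.mul_sum]
        _ ≤ tiltLambda p n x * (C * ((γ * x) ^ k * HZ p (γ * x))) :=
            mul_le_mul_of_nonneg_left (h _ hAx _ (fun z hz => mem_ballZ.1 hz)) hΛ0.le
        _ = _ := by ring
    · -- only `k = 1` with `1 < α < 2` remains
      have hk1 : k = 1 ∧ 1 < α ∧ α < 2 := by
        simp only [Finset.mem_insert, Finset.mem_singleton] at hk
        rcases hk with rfl | rfl | rfl <;> rcases hα with h | h <;> norm_num at hkα <;>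
          first
          | exact ⟨rfl, h⟩
          | linarith [h.1, h.2]
      obtain ⟨rfl, h1α, hα2⟩ := hk1
      obtain ⟨C, hC, A, hA, h⟩ := karamata_truncated hp0 hp1 hH 2 (by exact_mod_cast hα2)
      obtain ⟨C', hC', A', hA', h'⟩ := truncated_mean hp0 hp1 hH h1α (hmean h1α)
      refine ⟨C' + C, by positivity, max A A', fun n x hx hAx hΛ => ?_⟩
      have hx' : (0 : ℝ) < x := by exact_mod_cast hx
      have hy : 0 < γ * x := by positivity
      have hΛ0 : 0 < tiltLambda p n x := by linarith
      set y : ℝ := γ * x with hydef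
      set Λ := tiltLambda p n x with hΛdef
      have hsplit : tiltMoment p γ 1 n x = ∑ z ∈ ballZ y, (z : ℝ) * p z +
          ∑ z ∈ ballZ y, (z : ℝ) * (Real.exp (tiltMu p γ n x * z) - 1) * p z := by
        rw [tiltMoment_eq_sum, ← Finset.sum_add_distrib]
        exact Finset.sum_congr rfl (fun z _ => by ring)
      have hsecond : |∑ z ∈ ballZ y, (z : ℝ) * (Real.exp (tiltMu p γ n x * z) - 1) * p z|
          ≤ Λ / y * (C * (y ^ 2 * HZ p y)) := by
        calc _ ≤ ∑ z ∈ ballZ y, Λ / y * (|(z : ℝ)| ^ 2 * p z) := by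
              refine (Finset.abs_sum_le_sum_abs _ _).trans (Finset.sum_le_sum (fun z hz => ?_))
              rw [mem_ballZ] at hz
              have hu : |(z : ℝ) / y| ≤ 1 := by
                rw [abs_div, abs_of_pos hy, div_le_one hy]
                exact hz
              have he := abs_exp_sub_one_le_chord (Real.log_nonneg hΛ) hu
              rw [Real.exp_log hΛ0, abs_div, abs_of_pos hy] at he
              have hmu : tiltMu p γ n x * z = Real.log Λ * (z / y) := by
                rw [tiltMu]; ring
              have he2 : |Real.exp (tiltMu p γ n x * z) - 1| ≤ |(z : ℝ)| / y * Λ := by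
                rw [hmu]
                refine he.trans (mul_le_mul_of_nonneg_left (by linarith) (by positivity))
              rw [abs_mul, abs_mul, abs_of_nonneg (hp0 z)]
              calc _ ≤ |(z : ℝ)| * (|(z : ℝ)| / y * Λ) * p z :=
                    mul_le_mul_of_nonneg_right
                      (mul_le_mul_of_nonneg_left he2 (abs_nonneg _)) (hp0 z)
                _ = _ := by ring
          _ = Λ / y * ∑ z ∈ ballZ y, |(z : ℝ)| ^ 2 * p z := by rw [Finset.mul_sum]
          _ ≤ _ := mul_le_mul_of_nonneg_left
              (h _ ((le_max_left _ _).trans hAx) _ (fun z hz => mem_ballZ.1 hz)) (by positivity)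
      have hfirst : |∑ z ∈ ballZ y, (z : ℝ) * p z| ≤ Λ * (C' * (y * HZ p y)) := by
        refine (h' y ((le_max_right _ _).trans hAx)).trans ?_
        have := hpos y
        exact le_mul_of_one_le_left (by positivity) hΛ
      rw [hsplit]
      refine (abs_add_le _ _).trans ((add_le_add hfirst hsecond).trans (le_of_eq ?_))
      field_simp
  -- uniform constants over the three values of `k`
  obtain ⟨C1, hC1, A1, h1⟩ := core 1 (by simp)
  obtain ⟨C2, hC2, A2, h2⟩ := core 2 (by simp)
  obtain ⟨C3, hC3, A3, h3⟩ := core 3 (by simp)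
  have hall : ∀ k ∈ ({1, 2, 3} : Finset ℕ), ∀ n : ℕ, ∀ x : ℤ,
      0 < x → max A1 (max A2 A3) ≤ γ * x → 1 ≤ tiltLambda p n x →
      |tiltMoment p γ k n x| ≤
        (C1 + C2 + C3) * (tiltLambda p n x * ((γ * x) ^ k * HZ p (γ * x))) := by
    intro k hk n x hx hA hΛ
    have hx' : (0 : ℝ) < x := by exact_mod_cast hx
    simp only [max_le_iff] at hA
    have hnn : 0 ≤ tiltLambda p n x * ((γ * x) ^ k * HZ p (γ * x)) := by
      have := hpos (γ * x)
      positivity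
    simp only [Finset.mem_insert, Finset.mem_singleton] at hk
    rcases hk with rfl | rfl | rfl
    · exact (h1 n x hx hA.1 hΛ).trans (mul_le_mul_of_nonneg_right (by linarith) hnn)
    · exact (h2 n x hx hA.2.1 hΛ).trans (mul_le_mul_of_nonneg_right (by linarith) hnn)
    · exact (h3 n x hx hA.2.2 hΛ).trans (mul_le_mul_of_nonneg_right (by linarith) hnn)
  -- `H(γx) ≤ K F̄(x)` for large `x`
  have hFpos : ∀ᶠ x : ℝ in atTop, q / 2 * HZ p x < FbarZ p x := by
    filter_upwards [hFq.eventually (lt_mem_nhds (half_lt_self hq))] with x hx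
    exact (lt_div_iff₀ (hpos x)).1 hx
  have hHγ : ∀ᶠ x : ℝ in atTop, HZ p (γ * x) < (γ ^ (-α) + 1) * HZ p x := by
    filter_upwards [(hH γ hγ).eventually (gt_mem_nhds (lt_add_one _))] with x hx
    exact (div_lt_iff₀ (hpos x)).1 hx
  have hlarge : ∀ᶠ x : ℝ in atTop, max A1 (max A2 A3) ≤ γ * x :=
    (tendsto_id.const_mul_atTop hγ).eventually_ge_atTop _
  obtain ⟨X, hX⟩ := eventually_atTop.1
    (((hFpos.and hHγ).and hlarge).and (eventually_gt_atTop (0 : ℝ)))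
  -- `n H(2 aₙ) → 2^(-α) < 1`, so `θ₀ = 2` already gives `Λ ≥ 1`
  have hn2 : Tendsto (fun n : ℕ => (n : ℝ) * HZ p (2 * a n)) atTop (𝓝 ((2 : ℝ) ^ (-α))) := by
    have := haH.mul ((hH 2 two_pos).comp ha)
    rw [one_mul] at this
    refine this.congr (fun n => ?_)
    have := (hpos (a n)).ne'
    simp only [Function.comp]
    field_simp
  have h2α : (2 : ℝ) ^ (-α) < 1 := Real.rpow_lt_one_of_one_lt_of_neg one_lt_two (by linarith)
  have ha2 : ∀ᶠ n : ℕ in atTop, X ≤ 2 * a n :=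
    (ha.const_mul_atTop two_pos).eventually_ge_atTop _
  obtain ⟨N, hN⟩ := eventually_atTop.1
    (((hn2.eventually (gt_mem_nhds h2α)).and ha2).and (eventually_gt_atTop 0))
  set G := γ ^ (-α) + 1 with hG
  have hGpos : 0 < G := by positivity
  refine ⟨(C1 + C2 + C3) * (γ + γ ^ 2 + γ ^ 3) * (G * (2 / q)), by positivity, N, 2, two_pos, ?_⟩
  intro n hn x hx k hk
  obtain ⟨⟨hnH, hXa⟩, hn0⟩ := hN n hn
  obtain ⟨⟨⟨hF, hHg⟩, hA⟩, hx0⟩ := hX (x : ℝ) (hXa.trans hx)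
  have hn0' : (0 : ℝ) < n := by exact_mod_cast hn0
  have hFx : 0 < FbarZ p x := lt_trans (mul_pos (half_pos hq) (hpos _)) hF
  have hΛ : 1 ≤ tiltLambda p n x := by
    rw [tiltLambda, le_div_iff₀ (mul_pos hn0' hFx), one_mul]
    calc (n : ℝ) * FbarZ p x ≤ n * HZ p (2 * a n) :=
          mul_le_mul_of_nonneg_left ((FbarZ_le_HZ hp0 hp1.summable _).trans
            (HZ_antitone hp0 hp1.summable hx)) hn0'.le
      _ ≤ 1 := hnH.le
  refine (hall k hk n x (by exact_mod_cast hx0) hA hΛ).trans ?_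
  have hratio : tiltLambda p n x * HZ p (γ * x) ≤ G * (2 / q) / n := by
    rw [tiltLambda, one_div_mul_eq_div, div_le_div_iff₀ (mul_pos hn0' hFx) hn0']
    have h5 : HZ p (γ * x) ≤ G * (2 / q) * FbarZ p x := by
      calc HZ p (γ * x) ≤ G * HZ p x := hHg.le
        _ = G * (2 / q) * (q / 2 * HZ p x) := by field_simp
        _ ≤ _ := mul_le_mul_of_nonneg_left hF.le (by positivity)
    nlinarith
  have hγk : γ ^ k ≤ γ + γ ^ 2 + γ ^ 3 := by
    simp only [Finset.mem_insert, Finset.mem_singleton] at hk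
    have := pow_pos hγ 2
    have := pow_pos hγ 3
    rcases hk with rfl | rfl | rfl <;> linarith
  calc (C1 + C2 + C3) * (tiltLambda p n x * ((γ * x) ^ k * HZ p (γ * x)))
      = (C1 + C2 + C3) * γ ^ k * (x : ℝ) ^ k * (tiltLambda p n x * HZ p (γ * x)) := by
        rw [mul_pow]; ring
    _ ≤ (C1 + C2 + C3) * (γ + γ ^ 2 + γ ^ 3) * (x : ℝ) ^ k * (G * (2 / q) / n) := by
        have := hpos (γ * x)
        gcongr
    _ = _ := by ring
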